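/- Let r ≥ 2, Δ_max > 0, L > 0 and m ≥ 0, and set C₁ = rL + (r−1)2^{r−2} + c_r^{(1)}, C₂ = 2^{r−1} L^r c^{(2)}_{r,Δ_max} m, C₃ = C₂ + 2^{r−2} L^r (1 + rΔ_max^{r−1})(1 + c_r^{(1)} Δ_max). Then for every Δ ∈ (0, Δ_max), every t, every b, σ satisfying |b(t,x)| + ‖σ(t,x)‖ ≤ L(1+|x|) (operator norm for σ), every ℝ^q-valued random vector Z with E[Z] = 0 and E|Z|^r ≤ m, and every x ∈ ℝ^d: E| x + Δ b(t,x) + √Δ σ(t,x) Z |^r ≤ e^{Δ(C₁+C₂)} |x|^r + Δ C₃. -/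

import Mathlib

open MeasureTheory Real

noncomputable section

abbrev Euc (d : ℕ) : Type := EuclideanSpace ℝ (Fin d)

def c₁ (r : ℝ) : ℝ := 2 ^ (max (r - 3) 0) * ((r - 1) * (r - 2) / 2)

def c₂ (r h₀ : ℝ) : ℝ := 2 ^ (max (r - 3) 0) * (r - 1) * (1 + r / 2 * h₀ ^ (r / 2 - 1))

theorem add_mul_rpow_mul_rpow_le {s t A B : ℝ} (hs : 0 ≤ s) (ht : 0 ≤ t) (hst : 0 < s + t)
    (hA : 0 ≤ A) (hB : 0 ≤ B) :
    (s + t) * (A ^ s * B ^ t) ≤ s * A ^ (s + t) + t * B ^ (s + t) := by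
  have h := Real.geom_mean_le_arith_mean2_weighted (w₁ := s / (s + t)) (w₂ := t / (s + t))
    (p₁ := A ^ (s + t)) (p₂ := B ^ (s + t)) (by positivity) (by positivity) (by positivity)
    (by positivity) (by field_simp)
  rw [← Real.rpow_mul hA, ← Real.rpow_mul hB, mul_div_cancel₀ _ hst.ne',
    mul_div_cancel₀ _ hst.ne'] at h
  calc (s + t) * (A ^ s * B ^ t)
      ≤ (s + t) * (s / (s + t) * A ^ (s + t) + t / (s + t) * B ^ (s + t)) := by gcongr
    _ = s * A ^ (s + t) + t * B ^ (s + t) := by field_simp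

theorem norm_rpow_smul_sub_le_of_norm_le {E : Type*} [NormedAddCommGroup E] [NormedSpace ℝ E]
    {p : ℝ} (hp : 0 ≤ p) {x y : E} (hxy : ‖x‖ ≤ ‖y‖) :
    ‖‖y‖ ^ p • y - ‖x‖ ^ p • x‖ ≤ (p + 1) * ‖y‖ ^ p * ‖y - x‖ := by
  have hle : ‖x‖ ^ p ≤ ‖y‖ ^ p := by gcongr
  have hyoung : (‖y‖ ^ p - ‖x‖ ^ p) * ‖x‖ ≤ p * ‖y‖ ^ p * (‖y‖ - ‖x‖) := by
    have h := add_mul_rpow_mul_rpow_le hp zero_le_one (by linarith) (norm_nonneg y) (norm_nonneg x)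
    rw [Real.rpow_one, Real.rpow_add_one' (norm_nonneg _) (by linarith),
      Real.rpow_add_one' (norm_nonneg _) (by linarith)] at h
    linarith
  calc ‖‖y‖ ^ p • y - ‖x‖ ^ p • x‖
      = ‖‖y‖ ^ p • (y - x) + (‖y‖ ^ p - ‖x‖ ^ p) • x‖ := by congr 1; module
    _ ≤ ‖‖y‖ ^ p • (y - x)‖ + ‖(‖y‖ ^ p - ‖x‖ ^ p) • x‖ := norm_add_le _ _
    _ = ‖y‖ ^ p * ‖y - x‖ + (‖y‖ ^ p - ‖x‖ ^ p) * ‖x‖ := by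
      rw [norm_smul, norm_smul, Real.norm_of_nonneg (by positivity),
        Real.norm_of_nonneg (sub_nonneg.2 hle)]
    _ ≤ ‖y‖ ^ p * ‖y - x‖ + p * ‖y‖ ^ p * ‖y - x‖ := by
      refine add_le_add_right (hyoung.trans ?_) _
      gcongr
      exact norm_sub_norm_le y x
    _ = (p + 1) * ‖y‖ ^ p * ‖y - x‖ := by ring

theorem norm_rpow_smul_sub_le {E : Type*} [NormedAddCommGroup E] [NormedSpace ℝ E]
    {p M : ℝ} (hp : 0 ≤ p) {x y : E} (hx : ‖x‖ ≤ M) (hy : ‖y‖ ≤ M) :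
    ‖‖y‖ ^ p • y - ‖x‖ ^ p • x‖ ≤ (p + 1) * M ^ p * ‖y - x‖ := by
  rcases le_total ‖x‖ ‖y‖ with h | h
  · refine (norm_rpow_smul_sub_le_of_norm_le hp h).trans ?_
    gcongr
  · rw [norm_sub_rev, norm_sub_rev y x]
    refine (norm_rpow_smul_sub_le_of_norm_le hp h).trans ?_
    gcongr

theorem add_rpow_le_two_rpow_mul {p a b : ℝ} (hp : 0 ≤ p) (ha : 0 ≤ a) (hb : 0 ≤ b) :
    (a + b) ^ p ≤ 2 ^ max (p - 1) 0 * (a ^ p + b ^ p) := by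
  rcases le_total p 1 with h | h
  · rw [max_eq_right (by linarith), Real.rpow_zero, one_mul]
    exact Real.rpow_add_le_add_rpow ha hb hp h
  · rw [max_eq_left (by linarith)]
    lift a to NNReal using ha
    lift b to NNReal using hb
    exact_mod_cast NNReal.rpow_add_le_mul_rpow_add_rpow a b h

theorem norm_add_rpow_le {E : Type*} [NormedAddCommGroup E] [InnerProductSpace ℝ E]
    {r : ℝ} (hr : 2 ≤ r) (a u : E) :
    ‖a + u‖ ^ r ≤ ‖a‖ ^ r + r * ‖a‖ ^ (r - 2) * inner ℝ a u
      + 2 ^ max (r - 3) 0 * (r - 1) * (r / 2 * (‖a‖ ^ (r - 2) * ‖u‖ ^ 2) + ‖u‖ ^ r) := by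
  set K : ℝ := 2 ^ max (r - 3) 0 with hK
  have hder : ∀ s : ℝ, HasDerivAt (fun s : ℝ => ‖a + s • u‖ ^ r)
      (r * ‖a + s • u‖ ^ (r - 2) * inner ℝ (a + s • u) u) s := by
    intro s
    have h1 : HasDerivAt (fun s : ℝ => a + s • u) u s := by
      simpa using ((hasDerivAt_id s).smul_const u).const_add a
    have h2 := (hasFDerivAt_norm_rpow (a + s • u) (p := r) (by linarith)).comp_hasDerivAt s h1
    exact h2.congr_deriv (by simp only [smul_apply, innerSL_apply_apply,
      smul_eq_mul])
  have hB : ∀ s : ℝ, HasDerivAt (fun s : ℝ => ‖a‖ ^ r + r * ‖a‖ ^ (r - 2) * inner ℝ a u * s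
      + K * (r - 1) * (r / 2 * (‖a‖ ^ (r - 2) * ‖u‖ ^ 2) * s ^ 2 + ‖u‖ ^ r * s ^ r))
      (r * ‖a‖ ^ (r - 2) * inner ℝ a u
        + K * (r - 1) * (r / 2 * (‖a‖ ^ (r - 2) * ‖u‖ ^ 2) * (2 * s)
          + ‖u‖ ^ r * (r * s ^ (r - 1)))) s := by
    intro s
    have h1 := (hasDerivAt_id s).const_mul (r * ‖a‖ ^ (r - 2) * inner ℝ a u)
    have h2 := (hasDerivAt_pow 2 s).const_mul (r / 2 * (‖a‖ ^ (r - 2) * ‖u‖ ^ 2))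
    have h3 := (Real.hasDerivAt_rpow_const (x := s) (p := r)
      (Or.inr (by linarith))).const_mul (‖u‖ ^ r)
    have h4 := (h1.const_add (‖a‖ ^ r)).add ((h2.add h3).const_mul (K * (r - 1)))
    exact h4.congr_deriv (by simp)
  have key := image_le_of_deriv_right_le_deriv_boundary (a := 0) (b := 1)
    (fun s _ => (hder s).continuousAt.continuousWithinAt)
    (fun s _ => (hder s).hasDerivWithinAt)
    (by simp [Real.zero_rpow (show r ≠ 0 by linarith)])
    (fun s _ => (hB s).continuousAt.continuousWithinAt)
    (fun s _ => (hB s).hasDerivWithinAt) ?_ (Set.right_mem_Icc.2 zero_le_one)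
  · simpa using key
  intro s hs
  have hs0 : 0 ≤ s := hs.1
  have hlip := norm_rpow_smul_sub_le (p := r - 2) (M := ‖a‖ + s * ‖u‖) (x := a) (y := a + s • u)
    (by linarith) (by linarith [mul_nonneg hs0 (norm_nonneg u)])
    ((norm_add_le _ _).trans (by rw [norm_smul, Real.norm_of_nonneg hs0]))
  rw [add_sub_cancel_left, norm_smul, Real.norm_of_nonneg hs0] at hlip
  have hpow := add_rpow_le_two_rpow_mul (p := r - 2) (by linarith) (norm_nonneg a)
    (mul_nonneg hs0 (norm_nonneg u))
  rw [show r - 2 - 1 = r - 3 by ring, ← hK] at hpow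
  have hsplit : (s * ‖u‖) ^ (r - 2) * (s * ‖u‖ ^ 2) = s ^ (r - 1) * ‖u‖ ^ r := by
    rw [Real.mul_rpow hs0 (norm_nonneg u), show r - 1 = r - 2 + 1 by ring,
      Real.rpow_add_one' hs0 (by linarith), ← Real.rpow_natCast ‖u‖ 2, mul_mul_mul_comm,
      ← Real.rpow_add_of_nonneg (norm_nonneg u) (by linarith) (by norm_num)]
    norm_num
  have hinner : ‖a + s • u‖ ^ (r - 2) * inner ℝ (a + s • u) u - ‖a‖ ^ (r - 2) * inner ℝ a u
      ≤ (r - 1) * (K * (‖a‖ ^ (r - 2) + (s * ‖u‖) ^ (r - 2))) * (s * ‖u‖ ^ 2) := by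
    calc ‖a + s • u‖ ^ (r - 2) * inner ℝ (a + s • u) u - ‖a‖ ^ (r - 2) * inner ℝ a u
        = inner ℝ (‖a + s • u‖ ^ (r - 2) • (a + s • u) - ‖a‖ ^ (r - 2) • a) u := by
          rw [inner_sub_left, real_inner_smul_left, real_inner_smul_left]
      _ ≤ ‖‖a + s • u‖ ^ (r - 2) • (a + s • u) - ‖a‖ ^ (r - 2) • a‖ * ‖u‖ :=
          real_inner_le_norm _ _
      _ ≤ ((r - 2 + 1) * (‖a‖ + s * ‖u‖) ^ (r - 2) * (s * ‖u‖)) * ‖u‖ := by gcongr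
      _ = (r - 1) * (‖a‖ + s * ‖u‖) ^ (r - 2) * (s * ‖u‖ ^ 2) := by ring
      _ ≤ _ := by
          have : 0 ≤ r - 1 := by linarith
          gcongr
  have hmul := mul_le_mul_of_nonneg_left hinner (show 0 ≤ r by linarith)
  have hsplit' := congrArg (fun z => r * (r - 1) * K * z) hsplit
  beta_reduce at hsplit'
  linarith

theorem norm_add_sqrt_smul_rpow_le {E : Type*} [NormedAddCommGroup E] [InnerProductSpace ℝ E]
    {r h h₀ : ℝ} (hr : 2 ≤ r) (hh : 0 < h) (hh₀ : h ≤ h₀) (a w : E) :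
    ‖a + √h • w‖ ^ r ≤ r * ‖a‖ ^ (r - 2) * (√h * inner ℝ a w)
      + ‖a‖ ^ r * (1 + c₁ r * h) + h * c₂ r h₀ * ‖w‖ ^ r := by
  have hmain := norm_add_rpow_le hr a (√h • w)
  have hsq : ‖√h • w‖ ^ 2 = h * ‖w‖ ^ 2 := by
    rw [norm_smul, mul_pow, Real.norm_of_nonneg (Real.sqrt_nonneg h), Real.sq_sqrt hh.le]
  have hrp : ‖√h • w‖ ^ r = h * h ^ (r / 2 - 1) * ‖w‖ ^ r := by
    rw [norm_smul, Real.mul_rpow (norm_nonneg _) (norm_nonneg _),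
      Real.norm_of_nonneg (Real.sqrt_nonneg h), Real.sqrt_eq_rpow, ← Real.rpow_mul hh.le,
      mul_comm h, ← Real.rpow_add_one hh.ne']
    congr 2
    ring
  rw [hsq, hrp, real_inner_smul_right] at hmain
  have hyoung := add_mul_rpow_mul_rpow_le (s := r - 2) (t := 2) (by linarith) zero_le_two
    (by linarith) (norm_nonneg a) (norm_nonneg w)
  rw [sub_add_cancel, Real.rpow_two] at hyoung
  have hmono : h ^ (r / 2 - 1) ≤ h₀ ^ (r / 2 - 1) :=
    Real.rpow_le_rpow hh.le hh₀ (by linarith)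
  have hr1 : 0 ≤ r - 1 := by linarith
  refine hmain.trans ?_
  rw [c₁, c₂]
  set K : ℝ := 2 ^ max (r - 3) 0
  have hK : 0 ≤ K := by positivity
  have e1 : K * (r - 1) * (h / 2) * (r * (‖a‖ ^ (r - 2) * ‖w‖ ^ 2))
      ≤ K * (r - 1) * (h / 2) * ((r - 2) * ‖a‖ ^ r + 2 * ‖w‖ ^ r) := by gcongr
  have e2 : K * (r - 1) * (h * h ^ (r / 2 - 1) * ‖w‖ ^ r)
      ≤ K * (r - 1) * (h * (r / 2 * h₀ ^ (r / 2 - 1)) * ‖w‖ ^ r) := by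
    gcongr
    nlinarith [Real.rpow_nonneg hh.le (r / 2 - 1)]
  linarith

theorem rpow_euler_drift_le {r Δ L ξ : ℝ} (hr : 2 ≤ r) (hΔ : 0 < Δ) (hL : 0 < L) (hξ : 0 ≤ ξ) :
    (ξ + Δ * (L * (1 + ξ))) ^ r ≤ exp (Δ * (r * L + (r - 1) * 2 ^ (r - 2))) * ξ ^ r
      + Δ * (2 ^ (r - 2) * L ^ r * (1 + r * Δ ^ (r - 1))) := by
  set α := (1 + Δ * L) * ξ with hα
  set β := Δ * L with hβ
  have hα0 : 0 ≤ α := by positivity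
  have hβ0 : 0 ≤ β := by positivity
  have hr1 : 0 ≤ r - 1 := by linarith
  have htan : (α + β) ^ r ≤ α ^ r + r * β * (α + β) ^ (r - 1) := by
    have h := add_mul_rpow_mul_rpow_le hr1 zero_le_one (by linarith) (add_nonneg hα0 hβ0) hα0
    have h' : (α + β) ^ r = (α + β) ^ (r - 1) * (α + β) := by
      rw [← Real.rpow_add_one' (by positivity) (by linarith), sub_add_cancel]
    rw [sub_add_cancel, Real.rpow_one] at h
    linear_combination h + r * h'
  have hadd := add_rpow_le_two_rpow_mul hr1 hα0 hβ0
  rw [max_eq_left (by linarith), show r - 1 - 1 = r - 2 by ring] at hadd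
  have hyoung := add_mul_rpow_mul_rpow_le hr1 zero_le_one (by linarith) hα0 hL.le
  rw [sub_add_cancel, Real.rpow_one] at hyoung
  have hβr : β * β ^ (r - 1) = Δ * Δ ^ (r - 1) * L ^ r := by
    rw [hβ, Real.mul_rpow hΔ.le hL.le, mul_mul_mul_comm, mul_comm L,
      ← Real.rpow_add_one hL.ne', sub_add_cancel]
  have hαr : α ^ r ≤ exp (Δ * (r * L)) * ξ ^ r := by
    rw [hα, Real.mul_rpow (by positivity) hξ]
    gcongr
    calc (1 + Δ * L) ^ r ≤ (exp (Δ * L)) ^ r := by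
          gcongr
          linarith [Real.add_one_le_exp (Δ * L)]
      _ = exp (Δ * (r * L)) := by rw [← Real.exp_mul]; ring_nf
  set T : ℝ := 2 ^ (r - 2)
  have hT : 0 ≤ T := by positivity
  have e1 : r * β * (α + β) ^ (r - 1) ≤ r * β * (T * (α ^ (r - 1) + β ^ (r - 1))) := by gcongr
  have e2 : T * Δ * (r * (α ^ (r - 1) * L)) ≤ T * Δ * ((r - 1) * α ^ r + 1 * L ^ r) := by gcongr
  have e3 := congrArg (fun z => r * T * z) hβr
  beta_reduce at e3
  have e4 : α ^ r * (1 + (r - 1) * T * Δ)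
      ≤ exp (Δ * (r * L + (r - 1) * T)) * ξ ^ r := by
    calc α ^ r * (1 + (r - 1) * T * Δ)
        ≤ (exp (Δ * (r * L)) * ξ ^ r) * exp ((r - 1) * T * Δ) := by
          gcongr
          linarith [Real.add_one_le_exp ((r - 1) * T * Δ)]
      _ = _ := by
          rw [mul_right_comm, ← Real.exp_add]
          ring_nf
  have e0 : ξ + Δ * (L * (1 + ξ)) = α + β := by rw [hα, hβ]; ring
  rw [e0]
  rw [hβ] at e1
  linarith

/-- One-step `r`-th moment bound for the Euler operator:  for `r ≥ 2`, `Δ ∈ (0, Δ_max)`,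
coefficients `b, σ` with linear growth `|b(t,x)| + ‖σ(t,x)‖ ≤ L(1+|x|)` (operator norm),
and any centered `Z` with `E|Z|^r ≤ m`:
`E|x + Δ b(t,x) + √Δ σ(t,x) Z|^r ≤ e^{Δ(C₁+C₂)}|x|^r + Δ C₃`. -/
theorem euler_one_step_moment_bound (d q : ℕ) (r Δmax L m : ℝ) (hr : 2 ≤ r)
    (hΔmax : 0 < Δmax) (hL : 0 < L) (hm : 0 ≤ m) :
    ∀ Δ ∈ Set.Ioo (0 : ℝ) Δmax, ∀ t : ℝ,
    ∀ (b : ℝ → Euc d → Euc d) (σ : ℝ → Euc d → (Euc q →L[ℝ] Euc d)),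
      (∀ s x, ‖b s x‖ + ‖σ s x‖ ≤ L * (1 + ‖x‖)) →
    ∀ (Ω : Type) (_ : MeasurableSpace Ω) (P : Measure Ω), IsProbabilityMeasure P →
    ∀ Z : Ω → Euc q, Measurable Z → Integrable Z P → (∫ ω, Z ω ∂P) = 0 →
      Integrable (fun ω => ‖Z ω‖ ^ r) P → (∫ ω, ‖Z ω‖ ^ r ∂P) ≤ m →
    ∀ x : Euc d,
      ∫ ω, ‖x + Δ • b t x + Real.sqrt Δ • (σ t x) (Z ω)‖ ^ r ∂P
        ≤ Real.exp (Δ * ((r * L + (r - 1) * 2 ^ (r - 2) + c₁ r)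
              + 2 ^ (r - 1) * L ^ r * c₂ r Δmax * m))
            * ‖x‖ ^ r
          + Δ * (2 ^ (r - 1) * L ^ r * c₂ r Δmax * m
              + 2 ^ (r - 2) * L ^ r * (1 + r * Δmax ^ (r - 1)) * (1 + c₁ r * Δmax)) := by
  intro Δ hΔ t b σ hgrowth Ω _ P _ Z _ hZint hZ0 hZr hZm x
  obtain ⟨hΔ0, hΔle⟩ := hΔ
  set a := x + Δ • b t x
  set A := σ t x
  have hr1 : 0 ≤ r - 1 := by linarith
  have hc1 : 0 ≤ c₁ r := by
    have : 0 ≤ r - 2 := by linarith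
    unfold c₁; positivity
  have hc2 : 0 ≤ c₂ r Δmax := by unfold c₂; positivity
  have hlin : Integrable (fun ω => r * ‖a‖ ^ (r - 2) * (√Δ * inner ℝ a (A (Z ω)))) P :=
    (((A.integrable_comp hZint).const_inner a).const_mul _).const_mul _
  have hlin' : Integrable (fun ω => r * ‖a‖ ^ (r - 2) * (√Δ * inner ℝ a (A (Z ω)))
      + ‖a‖ ^ r * (1 + c₁ r * Δ)) P := hlin.add (integrable_const _)
  have hlin0 : ∫ ω, r * ‖a‖ ^ (r - 2) * (√Δ * inner ℝ a (A (Z ω))) ∂P = 0 := by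
    rw [integral_const_mul, integral_const_mul, integral_inner (A.integrable_comp hZint),
      A.integral_comp_comm hZint, hZ0]
    simp
  have hrem : Integrable (fun ω => Δ * c₂ r Δmax * (‖A‖ ^ r * ‖Z ω‖ ^ r)) P :=
    (hZr.const_mul _).const_mul _
  have hstep : ∫ ω, ‖a + √Δ • A (Z ω)‖ ^ r ∂P
      ≤ ‖a‖ ^ r * (1 + c₁ r * Δ) + Δ * c₂ r Δmax * (‖A‖ ^ r * m) := by
    calc ∫ ω, ‖a + √Δ • A (Z ω)‖ ^ r ∂P
        ≤ ∫ ω, (r * ‖a‖ ^ (r - 2) * (√Δ * inner ℝ a (A (Z ω)))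
            + ‖a‖ ^ r * (1 + c₁ r * Δ) + Δ * c₂ r Δmax * (‖A‖ ^ r * ‖Z ω‖ ^ r)) ∂P := by
          refine integral_mono_of_nonneg (.of_forall fun ω => by positivity)
            (hlin'.add hrem) (.of_forall fun ω => ?_)
          refine (norm_add_sqrt_smul_rpow_le hr hΔ0 hΔle.le a (A (Z ω))).trans ?_
          beta_reduce
          rw [← Real.mul_rpow (norm_nonneg _) (norm_nonneg _)]
          gcongr
          exact A.le_opNorm _
      _ = ‖a‖ ^ r * (1 + c₁ r * Δ) + Δ * c₂ r Δmax * (‖A‖ ^ r * ∫ ω, ‖Z ω‖ ^ r ∂P) := by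
          rw [integral_add hlin' hrem,
            integral_add hlin (integrable_const _), hlin0, integral_const, probReal_univ,
            one_smul, zero_add, integral_const_mul, integral_const_mul]
      _ ≤ _ := by gcongr
  have hbA := hgrowth t x
  have hA' : ‖A‖ ^ r ≤ L ^ r * (2 ^ (r - 1) * (1 + ‖x‖ ^ r)) := by
    calc ‖A‖ ^ r ≤ (L * (1 + ‖x‖)) ^ r := by
          gcongr
          linarith [norm_nonneg (b t x)]
      _ = L ^ r * (1 + ‖x‖) ^ r := Real.mul_rpow hL.le (by positivity)
      _ ≤ _ := by
          have h := add_rpow_le_two_rpow_mul (p := r) (by linarith) zero_le_one (norm_nonneg x)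
          rw [max_eq_left hr1, Real.one_rpow] at h
          gcongr
  have hdrift : ‖a‖ ^ r ≤ exp (Δ * (r * L + (r - 1) * 2 ^ (r - 2))) * ‖x‖ ^ r
      + Δ * (2 ^ (r - 2) * L ^ r * (1 + r * Δmax ^ (r - 1))) := by
    calc ‖a‖ ^ r ≤ (‖x‖ + Δ * (L * (1 + ‖x‖))) ^ r := by
          gcongr
          refine (norm_add_le _ _).trans ?_
          rw [norm_smul, Real.norm_of_nonneg hΔ0.le]
          gcongr
          linarith [norm_nonneg (σ t x)]
      _ ≤ _ := rpow_euler_drift_le hr hΔ0 hL (norm_nonneg x)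
      _ ≤ _ := by gcongr
  set C₀ : ℝ := r * L + (r - 1) * 2 ^ (r - 2) with hC₀
  set C₂ : ℝ := 2 ^ (r - 1) * L ^ r * c₂ r Δmax * m with hC₂
  set D : ℝ := 2 ^ (r - 2) * L ^ r * (1 + r * Δmax ^ (r - 1)) with hD
  have hC₀0 : 0 ≤ C₀ := by positivity
  have hC₂0 : 0 ≤ C₂ := by positivity
  have hD0 : 0 ≤ D := by positivity
  have hexp : exp (Δ * C₀) * (1 + c₁ r * Δ) + Δ * C₂ ≤ exp (Δ * (C₀ + c₁ r + C₂)) := by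
    have h1 : exp (Δ * C₀) * (1 + c₁ r * Δ) ≤ exp (Δ * (C₀ + c₁ r)) := by
      rw [mul_add Δ C₀, Real.exp_add (Δ * C₀)]
      gcongr
      linarith [Real.add_one_le_exp (Δ * c₁ r)]
    have h2 : 1 ≤ exp (Δ * (C₀ + c₁ r)) := Real.one_le_exp (by positivity)
    have h3 : Δ * C₂ + 1 ≤ exp (Δ * C₂) := Real.add_one_le_exp _
    rw [mul_add Δ (C₀ + c₁ r), Real.exp_add]
    nlinarith [mul_nonneg hΔ0.le hC₂0]
  calc ∫ ω, ‖a + √Δ • A (Z ω)‖ ^ r ∂P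
      ≤ ‖a‖ ^ r * (1 + c₁ r * Δ) + Δ * c₂ r Δmax * (‖A‖ ^ r * m) := hstep
    _ ≤ (exp (Δ * C₀) * ‖x‖ ^ r + Δ * D) * (1 + c₁ r * Δ)
        + Δ * c₂ r Δmax * (L ^ r * (2 ^ (r - 1) * (1 + ‖x‖ ^ r)) * m) := by gcongr
    _ = (exp (Δ * C₀) * (1 + c₁ r * Δ) + Δ * C₂) * ‖x‖ ^ r
        + Δ * (C₂ + D * (1 + c₁ r * Δ)) := by rw [hC₂]; ring
    _ ≤ exp (Δ * (C₀ + c₁ r + C₂)) * ‖x‖ ^ r + Δ * (C₂ + D * (1 + c₁ r * Δmax)) := by gcongr
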